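/- Let |·|⋆ be a monotone norm on ℝ^m, let N_1, …, N_m be positive integers with N := N_1 + … + N_m, and for each i = 1, …, m let C_i : ℤ → [0,∞) be a cost and ∥·∥^i a monotone norm on ℝ^{N_i} satisfying the single-material compatibility equation for C_i. Define C : ℤ^m → [0,∞) by C(z_1, …, z_m) := |(C_1(z_1), …, C_m(z_m))|⋆, and define ∥·∥ on ℝ^N ≅ ℝ^{N_1} × … × ℝ^{N_m} by ∥x∥ := |(∥x^{(1)}∥^1, …, ∥x^{(m)}∥^m)|⋆, where x = (x^{(1)}, …, x^{(m)}) is the block decomposition. Then ∥·∥ is a monotone norm on ℝ^N and it satisfies the compatibility equation for C (with blocks B_1, …, B_m of sizes N_1, …, N_m). -/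

import Mathlib

/-- `f` is a norm on the real vector space `E`. -/
def IsNorm {E : Type*} [AddCommGroup E] [Module ℝ E] (f : E → ℝ) : Prop :=
  (∀ x, 0 ≤ f x) ∧ (∀ x, f x = 0 ↔ x = 0) ∧
    (∀ x y, f (x + y) ≤ f x + f y) ∧ ∀ (c : ℝ) (x : E), f (c • x) = |c| * f x

/-- The partial order `x ⪯ y` on real vectors. -/
def PreOrd {ι : Type*} (x y : ι → ℝ) : Prop :=
  ∀ j, |x j| ≤ |y j| ∧ 0 ≤ x j * y j

/-- The single-material (`m = 1`) compatibility equation between a cost `C : ℤ → ℝ`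
and a norm `nrm` on `ℝ^N`. -/
def CompatEq1 (N : ℕ) (C : ℤ → ℝ) (nrm : (Fin N → ℝ) → ℝ) : Prop :=
  ∀ θ : ℤ, θ.natAbs ≤ N →
    ∀ K : Finset (Fin N), K.card = θ.natAbs →
      C θ = nrm fun j => (θ.sign : ℝ) * (if j ∈ K then 1 else 0)

/-- The multi-material compatibility equation between a cost `C : ℤ^m → ℝ` and a
norm on `ℝ^N`, where `{1, …, N}` is partitioned into blocks of sizes `N_1, …, N_m`
(realized as the sigma type `Σ i, Fin (N i)`). -/
def CompatEq (m : ℕ) (N : Fin m → ℕ) (C : (Fin m → ℤ) → ℝ)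
    (nrm : ((Σ i : Fin m, Fin (N i)) → ℝ) → ℝ) : Prop :=
  ∀ θ : Fin m → ℤ, (∀ i, (θ i).natAbs ≤ N i) →
    ∀ K : (i : Fin m) → Finset (Fin (N i)), (∀ i, (K i).card = (θ i).natAbs) →
      C θ = nrm fun j => ((θ j.1).sign : ℝ) * (if j.2 ∈ K j.1 then 1 else 0)

/-!
On the nonnegative orthant, `⪯` is the coordinatewise order, so a monotone `|·|⋆` is nondecreasing
there; applied to the vector of block norms, this turns the triangle inequalities of the blocks into
the one of the composite norm. The compatibility equation holds block by block, whatever `|·|⋆` is.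
-/

/-- A real function on `ℝ^ι` is monotone for `⪯`; for a norm this is the notion of a monotone
norm. -/
def IsPreOrdMonotone {ι : Type*} (f : (ι → ℝ) → ℝ) : Prop :=
  ∀ x y, PreOrd x y → f x ≤ f y

/-- The composite `x ↦ |(∥x^{(1)}∥^1, …, ∥x^{(m)}∥^m)|⋆` of an outer function `ν` and block
functions `p i`; the coordinates of `x` are indexed by a sigma type, whose fibres are the blocks. -/
def blockComposite {ι : Type*} {κ : ι → Type*} (ν : (ι → ℝ) → ℝ) (p : ∀ i, (κ i → ℝ) → ℝ)
    (x : (Σ i, κ i) → ℝ) : ℝ :=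
  ν fun i => p i fun k => x ⟨i, k⟩

section Monotone

variable {ι : Type*}

theorem PreOrd.of_nonneg_of_le {x y : ι → ℝ} (hx : 0 ≤ x) (hxy : x ≤ y) : PreOrd x y := fun j =>
  ⟨abs_le_abs_of_nonneg (hx j) (hxy j), mul_nonneg (hx j) ((hx j).trans (hxy j))⟩

theorem PreOrd.comp {κ : Type*} {x y : ι → ℝ} (hxy : PreOrd x y) (g : κ → ι) :
    PreOrd (x ∘ g) (y ∘ g) := fun k => hxy (g k)

theorem IsPreOrdMonotone.monotoneOn_nonneg {f : (ι → ℝ) → ℝ} (hf : IsPreOrdMonotone f) :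
    MonotoneOn f (Set.Ici 0) := fun x hx y _ hxy => hf x y (.of_nonneg_of_le hx hxy)

theorem IsPreOrdMonotone.blockComposite {κ : ι → Type*} {ν : (ι → ℝ) → ℝ}
    {p : ∀ i, (κ i → ℝ) → ℝ} (hν : MonotoneOn ν (Set.Ici 0)) (hp_nonneg : ∀ i x, 0 ≤ p i x)
    (hp : ∀ i, IsPreOrdMonotone (p i)) : IsPreOrdMonotone (blockComposite ν p) := fun _ _ hxy =>
  hν (fun i => hp_nonneg i _) (fun i => hp_nonneg i _) fun i => hp i _ _ (hxy.comp (Sigma.mk i))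

end Monotone

section Norm

theorem IsNorm.comp_injective {E F : Type*} [AddCommGroup E] [Module ℝ E] [AddCommGroup F]
    [Module ℝ F] {f : F → ℝ} (hf : IsNorm f) (L : E →ₗ[ℝ] F) (hL : Function.Injective L) :
    IsNorm (f ∘ L) := by
  obtain ⟨nonneg, eq_zero_iff, add_le, smul_eq⟩ := hf
  refine ⟨fun x => nonneg (L x), fun x => ?_, fun x y => ?_, fun c x => ?_⟩
  · exact (eq_zero_iff (L x)).trans (map_eq_zero_iff L hL)
  · simpa only [Function.comp_apply, map_add] using add_le (L x) (L y)
  · simpa only [Function.comp_apply, map_smul] using smul_eq c (L x)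

variable {ι : Type*} {ν : (ι → ℝ) → ℝ}

theorem IsNorm.pi {E : ι → Type*} [∀ i, AddCommGroup (E i)] [∀ i, Module ℝ (E i)]
    {p : ∀ i, E i → ℝ} (hν : IsNorm ν) (hν_mono : MonotoneOn ν (Set.Ici 0))
    (hp : ∀ i, IsNorm (p i)) : IsNorm fun x : ∀ i, E i => ν fun i => p i (x i) := by
  obtain ⟨ν_nonneg, ν_eq_zero_iff, ν_add_le, ν_smul⟩ := hν
  choose p_nonneg p_eq_zero_iff p_add_le p_smul using hp
  refine ⟨fun x => ν_nonneg _, fun x => ?_, fun x y => ?_, fun c x => ?_⟩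
  · simp only [ν_eq_zero_iff, funext_iff, Pi.zero_apply, p_eq_zero_iff]
  · calc
      ν (fun i => p i (x i + y i)) ≤ ν ((fun i => p i (x i)) + fun i => p i (y i)) :=
        hν_mono (fun i => p_nonneg i _) (fun i => add_nonneg (p_nonneg i _) (p_nonneg i _))
          fun i => p_add_le i (x i) (y i)
      _ ≤ ν (fun i => p i (x i)) + ν fun i => p i (y i) := ν_add_le _ _
  · calc
      ν (fun i => p i (c • x i)) = ν (|c| • fun i => p i (x i)) :=
        congrArg ν (funext fun i => p_smul i c (x i))
      _ = |c| * ν fun i => p i (x i) := by rw [ν_smul, abs_abs]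

theorem IsNorm.blockComposite {κ : ι → Type*} {p : ∀ i, (κ i → ℝ) → ℝ} (hν : IsNorm ν)
    (hν_mono : MonotoneOn ν (Set.Ici 0)) (hp : ∀ i, IsNorm (p i)) :
    IsNorm (blockComposite ν p) :=
  let curry := LinearEquiv.piCurry ℝ fun (i : ι) (_ : κ i) => ℝ
  (hν.pi hν_mono hp).comp_injective curry.toLinearMap curry.injective

end Norm

theorem CompatEq.blockComposite {m : ℕ} {N : Fin m → ℕ} {C : Fin m → ℤ → ℝ}
    {p : ∀ i, (Fin (N i) → ℝ) → ℝ} (ν : (Fin m → ℝ) → ℝ)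
    (h : ∀ i, CompatEq1 (N i) (C i) (p i)) :
    CompatEq m N (fun z => ν fun i => C i (z i)) (blockComposite ν p) := fun θ hθ K hK =>
  congrArg ν (funext fun i => h i (θ i) (hθ i) (K i) (hK i))

/-- Composite multi-material costs: if `|·|⋆` is a monotone norm
on `ℝ^m` and, for each `i`, `C_i : ℤ → [0,∞)` is a cost with a monotone norm
`∥·∥^i` on `ℝ^{N_i}` satisfying the single-material compatibility equation, then
`C(z) := |(C_1(z_1), …, C_m(z_m))|⋆` and
`∥x∥ := |(∥x^{(1)}∥^1, …, ∥x^{(m)}∥^m)|⋆` (block decomposition) define a monotone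
norm on `ℝ^N` satisfying the multi-material compatibility equation for `C`. -/
theorem composite_cost_compatible_norm {m : ℕ}
    (nrmStar : (Fin m → ℝ) → ℝ)
    (hstar : IsNorm nrmStar)
    (hstarMono : ∀ x y : Fin m → ℝ, PreOrd x y → nrmStar x ≤ nrmStar y)
    (N : Fin m → ℕ) (hN : ∀ i, 0 < N i)
    (Ci : (i : Fin m) → ℤ → ℝ) (hCi0 : ∀ i z, 0 ≤ Ci i z)
    (nrmi : (i : Fin m) → (Fin (N i) → ℝ) → ℝ)
    (hnrmi : ∀ i, IsNorm (nrmi i))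
    (hnrmiMono : ∀ i, ∀ x y : Fin (N i) → ℝ, PreOrd x y → nrmi i x ≤ nrmi i y)
    (hcompat : ∀ i, CompatEq1 (N i) (Ci i) (nrmi i))
    (C : (Fin m → ℤ) → ℝ)
    (hC : C = fun z => nrmStar fun i => Ci i (z i))
    (nrm : ((Σ i : Fin m, Fin (N i)) → ℝ) → ℝ)
    (hnrm : nrm = fun x => nrmStar fun i => nrmi i fun k => x ⟨i, k⟩) :
    IsNorm nrm ∧ (∀ x y, PreOrd x y → nrm x ≤ nrm y) ∧ CompatEq m N C nrm := by
  subst hC hnrm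
  have hstarMonoOn : MonotoneOn nrmStar (Set.Ici 0) := IsPreOrdMonotone.monotoneOn_nonneg hstarMono
  exact ⟨hstar.blockComposite hstarMonoOn hnrmi,
    IsPreOrdMonotone.blockComposite hstarMonoOn (fun i => (hnrmi i).1) hnrmiMono,
    CompatEq.blockComposite nrmStar hcompat⟩
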